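/- For all homogeneous f, g ∈ Λ(n), the supercommutator of Hamiltonian vector fields satisfies [D_H(f), D_H(g)] = D_H(D_H(f)(g)). -/

import Mathlib

open scoped BigOperators

noncomputable section

namespace CartanSuper

/-- Coordinates of the exterior algebra `Λ(n)` with respect to the monomial basis
`{x_S : S ⊆ {1,…,n}}`. -/
abbrev Lambda (n : ℕ) := Finset (Fin n) → ℂ

/-- Endomorphism algebra of `Λ(n)`. -/
abbrev E (n : ℕ) := Module.End ℂ (Lambda n)

variable (n : ℕ)

/-- `(−1)^k`. -/
def msign (k : ℕ) : ℂ := (-1 : ℂ) ^ k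

/-- The basis monomial `x_S = x_{i₁}⋯x_{i_k}` (indices in increasing order). -/
def mono (S : Finset (Fin n)) : Lambda n := fun T => if T = S then 1 else 0

/-- Number of inversions between `S` and `T`. -/
def inversions (S T : Finset (Fin n)) : ℕ := ((S ×ˢ T).filter fun p => p.2 < p.1).card

/-- The multiplication of `Λ(n)` in coordinates:
`x_S · x_T = (−1)^{inversions} x_{S ∪ T}` for disjoint `S, T` and `0` otherwise. -/
def lmulFun (f g : Lambda n) : Lambda n :=
  fun U => ∑ S ∈ U.powerset, msign (inversions n S (U \ S)) * f S * g (U \ S)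

/-- Left multiplication by an element of `Λ(n)`, as a linear map `Λ(n) →ₗ End Λ(n)`. -/
def mulOp : Lambda n →ₗ[ℂ] E n where
  toFun f :=
    { toFun := lmulFun n f
      map_add' := by
        intro g h; funext U
        simp [lmulFun, mul_add, Finset.sum_add_distrib]
      map_smul' := by
        intro c g; funext U
        simp only [lmulFun, Pi.smul_apply, smul_eq_mul, RingHom.id_apply, Finset.mul_sum]
        exact Finset.sum_congr rfl (by intros; ring) }
  map_add' := by
    intro f g; apply LinearMap.ext; intro h; funext U
    show lmulFun n (f + g) h U = lmulFun n f h U + lmulFun n g h U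
    simp only [lmulFun]
    rw [← Finset.sum_add_distrib]
    exact Finset.sum_congr rfl (by intros; simp [Pi.add_apply]; ring)
  map_smul' := by
    intro c f; apply LinearMap.ext; intro h; funext U
    show lmulFun n (c • f) h U = (c • lmulFun n f h) U
    simp only [lmulFun, Pi.smul_apply, smul_eq_mul, Finset.mul_sum]
    exact Finset.sum_congr rfl (by intros; ring)

/-- The superderivation `∂_i` of `Λ(n)`, in coordinates. -/
def pd (i : Fin n) : E n where
  toFun f := fun S =>
    if i ∈ S then 0 else msign (S.filter (· < i)).card * f (insert i S)
  map_add' := by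
    intro f g; funext S; by_cases h : i ∈ S <;> simp [h, mul_add]
  map_smul' := by
    intro c f; funext S; by_cases h : i ∈ S <;> simp [h] <;> ring

/-- The parity operator `σ` of `Λ(n)`: `σ(x_S) = (−1)^{|S|} x_S`. -/
def par : E n where
  toFun f := fun S => msign S.card * f S
  map_add' := by intro f g; funext S; simp [mul_add]
  map_smul' := by intro c f; funext S; simp; ring

/-- The super-commutator `[D,F] = D∘F − (−1)^{|D||F|} F∘D`, extended bilinearly to all of
`End Λ(n)` using the parity operator `σ`
(for homogeneous `D`, `σ∘D∘σ = (−1)^{|D|} D`). -/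
def sbFun (D F : E n) : E n :=
  D * F - (2:ℂ)⁻¹ • ((F + par n * F * par n) * D + (F - par n * F * par n) * (par n * D * par n))

/-- The super-commutator as a bilinear map. -/
def sbL : E n →ₗ[ℂ] E n →ₗ[ℂ] E n :=
  LinearMap.mk₂ ℂ (sbFun n)
    (fun D D' F => by
      simp only [sbFun, add_mul, sub_mul, mul_add, mul_sub, smul_mul_assoc, mul_smul_comm,
        smul_add, smul_sub]
      module)
    (fun c D F => by
      simp only [sbFun, add_mul, sub_mul, mul_add, mul_sub, smul_mul_assoc, mul_smul_comm,
        smul_add, smul_sub]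
      module)
    (fun D F F' => by
      simp only [sbFun, add_mul, sub_mul, mul_add, mul_sub, smul_mul_assoc, mul_smul_comm,
        smul_add, smul_sub]
      module)
    (fun c D F => by
      simp only [sbFun, add_mul, sub_mul, mul_add, mul_sub, smul_mul_assoc, mul_smul_comm,
        smul_add, smul_sub]
      module)

/-- Shorthand for the super-commutator. -/
def sb (D F : E n) : E n := sbL n D F

/-- The ℤ₂-homogeneous component of `Λ(n)` of parity `p`. -/
def lpar (p : ZMod 2) : Submodule ℂ (Lambda n) where
  carrier := {f | ∀ S : Finset (Fin n), (S.card : ZMod 2) ≠ p → f S = 0}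
  add_mem' := by intro f g hf hg S hS; simp [Pi.add_apply, hf S hS, hg S hS]
  zero_mem' := by intro S hS; rfl
  smul_mem' := by intro c f hf S hS; simp [Pi.smul_apply, hf S hS]

/-- The ℤ-homogeneous component of `Λ(n)` of degree `m` (zero unless `0 ≤ m ≤ n`). -/
def ldeg (m : ℤ) : Submodule ℂ (Lambda n) where
  carrier := {f | ∀ S : Finset (Fin n), (S.card : ℤ) ≠ m → f S = 0}
  add_mem' := by intro f g hf hg S hS; simp [Pi.add_apply, hf S hS, hg S hS]
  zero_mem' := by intro S hS; rfl
  smul_mem' := by intro c f hf S hS; simp [Pi.smul_apply, hf S hS]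

/-- Endomorphisms of `Λ(n)` that are ℤ₂-homogeneous of parity `p`. -/
def epar (p : ZMod 2) : Submodule ℂ (E n) where
  carrier := {D | ∀ (q : ZMod 2), ∀ f ∈ lpar n q, D f ∈ lpar n (q + p)}
  add_mem' := by
    intro D F hD hF q f hf
    simpa [LinearMap.add_apply] using (lpar n (q + p)).add_mem (hD q f hf) (hF q f hf)
  zero_mem' := by intro q f hf; simpa using (lpar n (q + p)).zero_mem
  smul_mem' := by
    intro c D hD q f hf
    simpa [LinearMap.smul_apply] using (lpar n (q + p)).smul_mem c (hD q f hf)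

/-- Endomorphisms of `Λ(n)` that are ℤ-homogeneous of degree `d`. -/
def edeg (d : ℤ) : Submodule ℂ (E n) where
  carrier := {D | ∀ (m : ℤ), ∀ f ∈ ldeg n m, D f ∈ ldeg n (m + d)}
  add_mem' := by
    intro D F hD hF m f hf
    simpa [LinearMap.add_apply] using (ldeg n (m + d)).add_mem (hD m f hf) (hF m f hf)
  zero_mem' := by intro m f hf; simpa using (ldeg n (m + d)).zero_mem
  smul_mem' := by
    intro c D hD m f hf
    simpa [LinearMap.smul_apply] using (ldeg n (m + d)).smul_mem c (hD m f hf)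

/-- The linear map `(f₁,…,f_n) ↦ ∑ᵢ fᵢ ∂ᵢ`. -/
def Wmap : (Fin n → Lambda n) →ₗ[ℂ] E n where
  toFun F := ∑ i, mulOp n (F i) * pd n i
  map_add' := by
    intro F G
    simp only [Pi.add_apply, map_add, add_mul, Finset.sum_add_distrib]
  map_smul' := by
    intro c F
    simp only [RingHom.id_apply, Pi.smul_apply, map_smul, smul_mul_assoc, Finset.smul_sum]

/-- The divergence `(f₁,…,f_n) ↦ ∑ᵢ ∂ᵢ(fᵢ)`. -/
def divMap : (Fin n → Lambda n) →ₗ[ℂ] Lambda n where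
  toFun F := ∑ i, pd n i (F i)
  map_add' := by
    intro F G
    simp only [Pi.add_apply, map_add, Finset.sum_add_distrib]
  map_smul' := by
    intro c F
    simp only [RingHom.id_apply, Pi.smul_apply, map_smul, Finset.smul_sum]

/-- The Witt type Lie superalgebra `W(n) = {∑ fᵢ∂ᵢ : fᵢ ∈ Λ(n)}`. -/
def Wn : Submodule ℂ (E n) := LinearMap.range (Wmap n)

/-- Divergence-free coefficient tuples. -/
def divFree : Submodule ℂ (Fin n → Lambda n) := LinearMap.ker (divMap n)

/-- The special type Lie superalgebra `S(n) = {∑ fᵢ∂ᵢ : ∑ ∂ᵢ(fᵢ) = 0}`. -/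
def Sn : Submodule ℂ (E n) := (divFree n).map (Wmap n)

/-- The top monomial `ω = x₁x₂⋯x_n`. -/
def omegaTop : Lambda n := mono n Finset.univ

/-- `1 − x₁x₂⋯x_n`. -/
def oneM : Lambda n := mono n ∅ - omegaTop n

/-- Multiplication of every coefficient by `1 − x₁⋯x_n`. -/
def oneMScale : (Fin n → Lambda n) →ₗ[ℂ] (Fin n → Lambda n) :=
  LinearMap.pi fun i => (mulOp n (oneM n)) ∘ₗ LinearMap.proj i

/-- The Lie superalgebra `S̃(n) = {(1−x₁⋯x_n)∑ fᵢ∂ᵢ : ∑ ∂ᵢ(fᵢ) = 0}` (`n` even). -/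
def Stn : Submodule ℂ (E n) := (divFree n).map (Wmap n ∘ₗ oneMScale n)

/-- The conjugate index `i'`. -/
def cidx (i : Fin n) : Fin n :=
  ⟨if i.val < n / 2 then i.val + n / 2 else if i.val < 2 * (n / 2) then i.val - n / 2 else i.val,
   by have := i.isLt; split_ifs <;> omega⟩

/-- The linear map `f ↦ D_H(f) = (−1)^{|f|} ∑ᵢ ∂ᵢ(f)∂_{i'}` (the sign is implemented by the
parity operator `σ`, so that this is a single linear map agreeing with `D_H` on homogeneous
elements). -/
def DHmap : Lambda n →ₗ[ℂ] E n where
  toFun f := ∑ i, mulOp n (pd n i (par n f)) * pd n (cidx n i)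
  map_add' := by
    intro f g
    simp only [map_add, add_mul, Finset.sum_add_distrib]
  map_smul' := by
    intro c f
    simp only [RingHom.id_apply, map_smul, smul_mul_assoc, Finset.smul_sum]

/-- Evaluation of the top coefficient. -/
def evalTop : Lambda n →ₗ[ℂ] ℂ := LinearMap.proj Finset.univ

/-- The Hamiltonian Lie superalgebra `H(n) = {D_H(f) : f ∈ ⊕_{i=0}^{n−1} Λ(n)_i}`. -/
def Hn : Submodule ℂ (E n) := (LinearMap.ker (evalTop n)).map (DHmap n)

/-- `H̃(n) = {D_H(f) : f ∈ Λ(n)}`. -/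
def HtN : Submodule ℂ (E n) := LinearMap.range (DHmap n)

/-- The degree derivation `𝒞 = ∑ᵢ xᵢ∂ᵢ`. -/
def CC : E n := ∑ i, mulOp n (mono n {i}) * pd n i

/-- The span of the diagonal elements `xᵢ∂ᵢ`. -/
def diagSpan : Submodule ℂ (E n) :=
  Submodule.span ℂ (Set.range fun i : Fin n => mulOp n (mono n {i}) * pd n i)

/-- The four families of Cartan type Lie superalgebras. -/
inductive CT | W | S | St | H
deriving DecidableEq

/-- Validity of the parameter `n` for each family. -/
def CT.valid : CT → ℕ → Prop
  | .W, n => 4 ≤ n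
  | .S, n => 4 ≤ n
  | .St, n => 4 ≤ n ∧ Even n
  | .H, n => 4 < n

/-- The Cartan type Lie superalgebra `L` itself. -/
def CT.algebra : CT → (n : ℕ) → Submodule ℂ (E n)
  | .W, n => Wn n
  | .S, n => Sn n
  | .St, n => Stn n
  | .H, n => Hn n

/-- The extended algebra `L'`: `L' = L` for `W(n)` and `S̃(n)`, `L' = S(n) ⊕ ℂ𝒞` for `S(n)`,
and `L' = H̃(n) ⊕ ℂ𝒞` for `H(n)`. -/
def CT.prime : CT → (n : ℕ) → Submodule ℂ (E n)
  | .W, n => Wn n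
  | .S, n => Sn n ⊔ Submodule.span ℂ {CC n}
  | .St, n => Stn n
  | .H, n => HtN n ⊔ Submodule.span ℂ {CC n}

/-- The top degree `ξ_L` of the ℤ-grading. -/
def CT.xi : CT → (n : ℕ) → ℤ
  | .W, n => (n : ℤ) - 1
  | .S, n => (n : ℤ) - 2
  | .St, n => (n : ℤ) - 2
  | .H, n => (n : ℤ) - 3

/-- The ℤ-grading component `L_j = L ∩ W(n)_j`; for `S̃(n)` the component of degree `−1`
is `span{(1−x₁⋯x_n)∂ᵢ}` instead. -/
def CT.grade (t : CT) (n : ℕ) (j : ℤ) : Submodule ℂ (E n) :=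
  match t with
  | .St =>
      if j = -1 then
        Submodule.span ℂ (Set.range fun i : Fin n => mulOp n (oneM n) * pd n i)
      else Stn n ⊓ edeg n j
  | t => t.algebra n ⊓ edeg n j

/-- The ℤ-grading component `L'_j` of the extended algebra `L'`. -/
def CT.grade' (t : CT) (n : ℕ) (j : ℤ) : Submodule ℂ (E n) :=
  match t with
  | .St => CT.grade .St n j
  | t => t.prime n ⊓ edeg n j

/-- The standard Cartan subalgebra `H_L` of `L`: the part of the diagonal
`span{xᵢ∂ᵢ}` lying in `L`. -/
def CT.cartan (t : CT) (n : ℕ) : Submodule ℂ (E n) := t.algebra n ⊓ diagSpan n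

/-- The weight space of `M ⊆ End Λ(n)` of weight `μ ∈ H_L^*` under the adjoint action
of the standard Cartan subalgebra of `L`. -/
def wtsp (t : CT) (n : ℕ) (M : Submodule ℂ (E n)) (μ : Module.Dual ℂ (t.cartan n)) :
    Submodule ℂ (E n) where
  carrier := {x | x ∈ M ∧ ∀ h : t.cartan n, sbL n h x = μ h • x}
  add_mem' := by
    rintro x y ⟨hx, hx'⟩ ⟨hy, hy'⟩
    exact ⟨M.add_mem hx hy, fun h => by simp [map_add, hx' h, hy' h, smul_add]⟩
  zero_mem' := ⟨M.zero_mem, fun h => by simp⟩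
  smul_mem' := by
    rintro c x ⟨hx, hx'⟩
    exact ⟨M.smul_mem c hx, fun h => by simp [map_smul, hx' h, smul_comm c]⟩

/-- The set of roots of `M` with respect to the standard Cartan subalgebra of `L`:
the nonzero weights with nonzero weight space. -/
def CT.roots (t : CT) (n : ℕ) (M : Submodule ℂ (E n)) : Set (Module.Dual ℂ (t.cartan n)) :=
  {ε | ε ≠ 0 ∧ wtsp t n M ε ≠ ⊥}

/-- The sign `(−1)^p` for `p ∈ ℤ₂`. -/
def sgn (p : ZMod 2) : ℂ := (-1 : ℂ) ^ p.val

/-- `f` is a super-biderivation of `L` of ℤ₂-degree `pf`: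
a bilinear map with `f(L_α, L_β) ⊆ L_{α+β+pf}` satisfying
`f([x,y],z) = (−1)^{|x||f|}[x,f(y,z)] + (−1)^{|y||z|}[f(x,z),y]` and
`f(x,[y,z]) = [f(x,y),z] + (−1)^{(|f|+|x|)|y|}[y,f(x,z)]` for homogeneous `x,y,z ∈ L`.
(The bilinear map is given as a bilinear map on the ambient space `End Λ(n)`;
only its restriction to `L` is relevant.) -/
structure IsSuperBider (L : Submodule ℂ (E n)) (pf : ZMod 2)
    (f : E n →ₗ[ℂ] E n →ₗ[ℂ] E n) : Prop where
  maps : ∀ (α β : ZMod 2), ∀ x ∈ L ⊓ epar n α, ∀ y ∈ L ⊓ epar n β,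
    f x y ∈ L ⊓ epar n (α + β + pf)
  eq1 : ∀ (α β γ : ZMod 2), ∀ x ∈ L ⊓ epar n α, ∀ y ∈ L ⊓ epar n β, ∀ z ∈ L ⊓ epar n γ,
    f (sbL n x y) z = sgn (α * pf) • sbL n x (f y z) + sgn (β * γ) • sbL n (f x z) y
  eq2 : ∀ (α β γ : ZMod 2), ∀ x ∈ L ⊓ epar n α, ∀ y ∈ L ⊓ epar n β, ∀ z ∈ L ⊓ epar n γ,
    f x (sbL n y z) = sbL n (f x y) z + sgn ((pf + α) * β) • sbL n y (f x z)

/-- `D` is a superderivation of `L` of ℤ₂-degree `p`: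
`D(L_α) ⊆ L_{α+p}` and `D([x,y]) = [D(x),y] + (−1)^{|D||x|}[x,D(y)]` for homogeneous
`x, y ∈ L`. (Given as a linear map on the ambient space `End Λ(n)`.) -/
structure IsSuperDer (L : Submodule ℂ (E n)) (p : ZMod 2)
    (D : E n →ₗ[ℂ] E n) : Prop where
  maps : ∀ (α : ZMod 2), ∀ x ∈ L ⊓ epar n α, D x ∈ L ⊓ epar n (α + p)
  leib : ∀ (α β : ZMod 2), ∀ x ∈ L ⊓ epar n α, ∀ y ∈ L ⊓ epar n β,
    D (sbL n x y) = sbL n (D x) y + sgn (p * α) • sbL n x (D y)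

/-- `f ∈ BDer(L)_ε`: the super-biderivation `f` has weight `ε ∈ H_L^*`, i.e.
`f(L_η, L_ζ) ⊆ L_{ε+η+ζ}` for all weights `η, ζ`. -/
def CT.HasWeight (t : CT) (n : ℕ) (f : E n →ₗ[ℂ] E n →ₗ[ℂ] E n)
    (ε : Module.Dual ℂ (t.cartan n)) : Prop :=
  ∀ (η ζ : Module.Dual ℂ (t.cartan n)),
    ∀ x ∈ wtsp t n (t.algebra n) η, ∀ y ∈ wtsp t n (t.algebra n) ζ,
      f x y ∈ wtsp t n (t.algebra n) (ε + η + ζ)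

/-- `f ∈ BDer(L)_i`: the super-biderivation `f` has ℤ-degree `i`, i.e.
`f(L_j, L_k) ⊆ L_{i+j+k}` for all `j, k ∈ ℤ`. -/
def CT.HasDeg (t : CT) (n : ℕ) (f : E n →ₗ[ℂ] E n →ₗ[ℂ] E n) (i : ℤ) : Prop :=
  ∀ (j k : ℤ), ∀ x ∈ t.grade n j, ∀ y ∈ t.grade n k, f x y ∈ t.grade n (i + j + k)

/-!
Both sides are bilinear, so `f` and `g` may be taken homogeneous. Composing vector fields
`X = ∑ aᵢ∂ᵢ` and `Y = ∑ bⱼ∂ⱼ` with the Leibniz rule gives first-order terms `X(bⱼ)∂ⱼ` and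
second-order terms `± bⱼaᵢ∂ᵢ∂ⱼ`; the latter cancel in `[X, Y]` because the coefficients
supercommute and the `∂ᵢ` anticommute. Hence `[X, Y] = ∑ (X(bⱼ) - (-1)^{|X||Y|} Y(aⱼ))∂ⱼ`.
For `X = D_H(f)`, `Y = D_H(g)` the coefficients are those of `D_H(D_H(f)(g))`: this follows from
the Leibniz rule `∂ⱼ(D_H(f)(g)) = D_H(∂ⱼf)(g) + (-1)^{|f|} D_H(f)(∂ⱼg)` and the skew-symmetry
`D_H(f)(g) = -(-1)^{|f||g|} D_H(g)(f)`.
-/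

section

variable {n : ℕ}

theorem msign_add (a b : ℕ) : msign (a + b) = msign a * msign b := pow_add _ _ _

theorem msign_one : msign 1 = -1 := pow_one _

theorem msign_mul_self (k : ℕ) : msign k * msign k = 1 := by
  rw [msign, ← mul_pow, neg_one_mul, neg_neg, one_pow]

theorem sgn_natCast (k : ℕ) : sgn k = msign k := by
  rw [sgn, msign, ZMod.val_natCast, ← neg_one_pow_eq_pow_mod_two]

theorem sgn_zero : sgn 0 = 1 := pow_zero _

theorem sgn_one : sgn 1 = -1 := by
  rw [← Nat.cast_one, sgn_natCast, msign_one]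

theorem sgn_add (p q : ZMod 2) : sgn (p + q) = sgn p * sgn q := by
  obtain ⟨k, rfl⟩ := ZMod.natCast_zmod_surjective p
  obtain ⟨l, rfl⟩ := ZMod.natCast_zmod_surjective q
  rw [← Nat.cast_add, sgn_natCast, msign_add, sgn_natCast, sgn_natCast]

theorem sgn_mul_self (p : ZMod 2) : sgn p * sgn p = 1 := by
  obtain ⟨k, rfl⟩ := ZMod.natCast_zmod_surjective p
  rw [sgn_natCast, msign_mul_self]

theorem sgn_succ_mul_succ (p q : ZMod 2) :
    sgn ((p + 1) * (q + 1)) = -(sgn (p * q) * sgn p * sgn q) := by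
  simp only [add_mul, mul_add, one_mul, mul_one, sgn_add, sgn_one]
  ring

theorem sgn_mul (p q : ZMod 2) :
    sgn (p * q) = 2⁻¹ * (1 + sgn p + sgn q - sgn p * sgn q) := by
  have zero_or_one : ∀ r : ZMod 2, r = 0 ∨ r = 1 := by decide
  rcases zero_or_one p with rfl | rfl <;> rcases zero_or_one q with rfl | rfl <;>
    norm_num [sgn_zero, sgn_one]

theorem inversions_eq_sum (S T : Finset (Fin n)) :
    inversions n S T = ∑ s ∈ S, ∑ t ∈ T, if t < s then 1 else 0 := by
  rw [inversions, Finset.card_filter, Finset.sum_product]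

theorem inversions_union_left {S S' : Finset (Fin n)} (T : Finset (Fin n)) (h : Disjoint S S') :
    inversions n (S ∪ S') T = inversions n S T + inversions n S' T := by
  simp only [inversions_eq_sum, Finset.sum_union h]

theorem inversions_union_right (S : Finset (Fin n)) {T T' : Finset (Fin n)} (h : Disjoint T T') :
    inversions n S (T ∪ T') = inversions n S T + inversions n S T' := by
  simp only [inversions_eq_sum, Finset.sum_union h, Finset.sum_add_distrib]

theorem inversions_insert_left {i : Fin n} {S : Finset (Fin n)} (T : Finset (Fin n))
    (h : i ∉ S) : inversions n (insert i S) T = inversions n {i} T + inversions n S T :=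
  inversions_union_left T (Finset.disjoint_singleton_left.2 h)

theorem inversions_insert_right {i : Fin n} (S : Finset (Fin n)) {T : Finset (Fin n)}
    (h : i ∉ T) : inversions n S (insert i T) = inversions n S {i} + inversions n S T :=
  inversions_union_right S (Finset.disjoint_singleton_left.2 h)

theorem inversions_add_inversions_swap {S T : Finset (Fin n)} (h : Disjoint S T) :
    inversions n S T + inversions n T S = S.card * T.card := by
  have count_pair : ∀ s ∈ S, ∀ t ∈ T,
      ((if t < s then 1 else 0) + if s < t then 1 else 0) = 1 := by
    intro s hs t ht
    rcases lt_or_gt_of_ne (Finset.disjoint_iff_ne.1 h s hs t ht) with hst | hts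
    · simp [hst, hst.le]
    · simp [hts, hts.le]
  rw [inversions_eq_sum, inversions_eq_sum, Finset.sum_comm (s := T), ← Finset.sum_add_distrib]
  simp only [← Finset.sum_add_distrib]
  rw [Finset.sum_congr rfl fun s hs => Finset.sum_congr rfl (count_pair s hs)]
  simp

theorem msign_card_mul_card {S T : Finset (Fin n)} (h : Disjoint S T) :
    msign (S.card * T.card) = msign (inversions n S T) * msign (inversions n T S) := by
  rw [← inversions_add_inversions_swap h, msign_add]

theorem msign_card {i : Fin n} {S : Finset (Fin n)} (h : i ∉ S) :
    msign S.card = msign (inversions n {i} S) * msign (inversions n S {i}) := by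
  simpa using msign_card_mul_card (Finset.disjoint_singleton_left.2 h)

theorem inversions_sdiff_add_inversions_sdiff {T S U : Finset (Fin n)} (hTS : T ⊆ S)
    (hSU : S ⊆ U) :
    inversions n S (U \ S) + inversions n T (S \ T) =
      inversions n T (U \ T) + inversions n (S \ T) (U \ S) := by
  have split_left : inversions n S (U \ S) =
      inversions n T (U \ S) + inversions n (S \ T) (U \ S) := by
    rw [← inversions_union_left _ Finset.disjoint_sdiff, Finset.union_sdiff_of_subset hTS]
  have split_right : inversions n T (U \ T) =
      inversions n T (U \ S) + inversions n T (S \ T) := by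
    rw [← Finset.sdiff_union_sdiff_cancel hSU hTS, inversions_union_right]
    exact Finset.disjoint_sdiff.symm.mono_right Finset.sdiff_subset
  rw [split_left, split_right]
  ring

theorem mulOp_apply_apply (f g : Lambda n) (U : Finset (Fin n)) :
    mulOp n f g U = ∑ S ∈ U.powerset, msign (inversions n S (U \ S)) * f S * g (U \ S) := rfl

theorem par_apply_apply (f : Lambda n) (S : Finset (Fin n)) :
    par n f S = msign S.card * f S := rfl

theorem pd_apply_of_mem {i : Fin n} {S : Finset (Fin n)} (h : i ∈ S) (f : Lambda n) :
    pd n i f S = 0 := if_pos h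

theorem pd_apply_of_notMem {i : Fin n} {S : Finset (Fin n)} (h : i ∉ S) (f : Lambda n) :
    pd n i f S = msign (inversions n {i} S) * f (insert i S) := by
  have card_eq : inversions n {i} S = (S.filter (· < i)).card := by simp [inversions_eq_sum]
  rw [card_eq]
  exact if_neg h

theorem pd_mul_pd (i j : Fin n) : pd n i * pd n j = (-1 : ℂ) • (pd n j * pd n i) := by
  refine LinearMap.ext fun f => funext fun S => ?_
  change pd n i (pd n j f) S = -1 * pd n j (pd n i f) S
  by_cases hi : i ∈ S
  · by_cases hj : j ∈ S
    · rw [pd_apply_of_mem hi, pd_apply_of_mem hj, mul_zero]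
    · rw [pd_apply_of_mem hi, pd_apply_of_notMem hj,
        pd_apply_of_mem (Finset.mem_insert_of_mem hi), mul_zero, mul_zero]
  by_cases hj : j ∈ S
  · rw [pd_apply_of_mem hj, pd_apply_of_notMem hi,
      pd_apply_of_mem (Finset.mem_insert_of_mem hj), mul_zero, mul_zero]
  rw [pd_apply_of_notMem hi, pd_apply_of_notMem hj]
  rcases eq_or_ne i j with rfl | hij
  · rw [pd_apply_of_mem (Finset.mem_insert_self i S), mul_zero, mul_zero]
  have swap_sign : msign (inversions n {i} {j}) = -msign (inversions n {j} {i}) := by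
    rcases lt_or_gt_of_ne hij with h | h <;>
      simp [inversions_eq_sum, msign, Finset.filter_singleton, h, h.not_gt]
  rw [pd_apply_of_notMem (by simp [hij.symm, hj]), pd_apply_of_notMem (by simp [hij, hi]),
    inversions_insert_right _ hi, inversions_insert_right _ hj, Finset.insert_comm,
    msign_add, msign_add, swap_sign]
  ring

theorem mulOp_apply_insert (f g : Lambda n) {i : Fin n} {U : Finset (Fin n)} (hi : i ∉ U) :
    mulOp n f g (insert i U) = ∑ S ∈ U.powerset, msign (inversions n S (U \ S)) *
      (msign (inversions n S {i}) * f S * g (insert i (U \ S)) +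
        msign (inversions n {i} (U \ S)) * f (insert i S) * g (U \ S)) := by
  rw [mulOp_apply_apply, Finset.sum_powerset_insert hi, ← Finset.sum_add_distrib]
  refine Finset.sum_congr rfl fun S hS => ?_
  have hiS : i ∉ S := fun h => hi (Finset.mem_powerset.1 hS h)
  have hiUS : i ∉ U \ S := fun h => hi (Finset.mem_sdiff.1 h).1
  have sdiff_insert : insert i U \ insert i S = U \ S := by
    rw [Finset.insert_sdiff_insert, Finset.sdiff_insert_of_notMem hi]
  rw [Finset.insert_sdiff_of_notMem _ hiS, sdiff_insert, inversions_insert_right _ hiUS,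
    inversions_insert_left _ hiS, msign_add, msign_add]
  ring

theorem mulOp_pd_add_mulOp_par_pd_apply_of_mem {i : Fin n} {U : Finset (Fin n)} (hi : i ∈ U)
    (f g : Lambda n) : mulOp n (pd n i f) g U + mulOp n (par n f) (pd n i g) U = 0 := by
  obtain ⟨V, hiV, rfl⟩ : ∃ V, i ∉ V ∧ insert i V = U :=
    ⟨U.erase i, Finset.notMem_erase i U, Finset.insert_erase hi⟩
  rw [mulOp_apply_insert _ _ hiV, mulOp_apply_insert _ _ hiV,
    ← Finset.sum_add_distrib]
  -- The terms in which `S` and `insert i S` carry the factor from `f` cancel.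
  refine Finset.sum_eq_zero fun S hS => ?_
  have hiS : i ∉ S := fun h => hiV (Finset.mem_powerset.1 hS h)
  have hiVS : i ∉ V \ S := fun h => hiV (Finset.mem_sdiff.1 h).1
  rw [pd_apply_of_notMem hiS, pd_apply_of_notMem hiVS,
    pd_apply_of_mem (Finset.mem_insert_self i S),
    pd_apply_of_mem (Finset.mem_insert_self i (V \ S)), par_apply_apply _ (insert i S)]
  simp only [Finset.card_insert_of_notMem hiS, msign_add, msign_one, msign_card hiS]
  linear_combination (-msign (inversions n S (V \ S)) * msign (inversions n S {i}) *
    msign (inversions n {i} S) * f (insert i S) * g (insert i (V \ S))) *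
    msign_mul_self (inversions n {i} (V \ S))

theorem pd_mul_mulOp (i : Fin n) (f : Lambda n) :
    pd n i * mulOp n f = mulOp n (pd n i f) + mulOp n (par n f) * pd n i := by
  refine LinearMap.ext fun g => funext fun U => ?_
  change pd n i (mulOp n f g) U = mulOp n (pd n i f) g U + mulOp n (par n f) (pd n i g) U
  by_cases hi : i ∈ U
  · rw [pd_apply_of_mem hi, mulOp_pd_add_mulOp_par_pd_apply_of_mem hi]
  · rw [pd_apply_of_notMem hi, mulOp_apply_insert _ _ hi, mulOp_apply_apply, mulOp_apply_apply,
      ← Finset.sum_add_distrib, Finset.mul_sum]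
    refine Finset.sum_congr rfl fun S hS => ?_
    have hSU := Finset.mem_powerset.1 hS
    have hiS : i ∉ S := fun h => hi (hSU h)
    have hiUS : i ∉ U \ S := fun h => hi (Finset.mem_sdiff.1 h).1
    have split_sign : msign (inversions n {i} U) =
        msign (inversions n {i} S) * msign (inversions n {i} (U \ S)) := by
      rw [← msign_add, ← inversions_union_right _ Finset.disjoint_sdiff,
        Finset.union_sdiff_of_subset hSU]
    rw [pd_apply_of_notMem hiS, pd_apply_of_notMem hiUS, par_apply_apply, msign_card hiS,
      split_sign]
    linear_combination (msign (inversions n S (U \ S)) * msign (inversions n {i} S) *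
      f (insert i S) * g (U \ S)) * msign_mul_self (inversions n {i} (U \ S))

theorem mulOp_mulOp (f g : Lambda n) : mulOp n (mulOp n f g) = mulOp n f * mulOp n g := by
  refine LinearMap.ext fun h => funext fun U => ?_
  change mulOp n (mulOp n f g) h U = mulOp n f (mulOp n g h) U
  simp only [mulOp_apply_apply, Finset.mul_sum, Finset.sum_mul]
  rw [Finset.sum_sigma', Finset.sum_sigma']
  -- Reindex the pairs `T ⊆ S ⊆ U` by `T` and `S \ T ⊆ U \ T`.
  refine Finset.sum_bij' (fun x _ => ⟨x.2, x.1 \ x.2⟩) (fun x _ => ⟨x.1 ∪ x.2, x.1⟩)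
    ?_ ?_ ?_ ?_ ?_ <;> rintro ⟨S, T⟩ hx <;>
    simp only [Finset.mem_sigma, Finset.mem_powerset] at hx ⊢ <;> obtain ⟨hS, hT⟩ := hx
  · exact ⟨hT.trans hS, Finset.sdiff_subset_sdiff hS le_rfl⟩
  · exact ⟨Finset.union_subset hS (hT.trans Finset.sdiff_subset), Finset.subset_union_left⟩
  · rw [Finset.union_sdiff_of_subset hT]
  · rw [Finset.union_sdiff_cancel_left (Finset.disjoint_sdiff.mono_right hT)]
  · have signs := congrArg msign (inversions_sdiff_add_inversions_sdiff hT hS)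
    rw [msign_add, msign_add] at signs
    rw [sdiff_sdiff_sdiff_cancel_right hT]
    linear_combination f T * g (S \ T) * h (U \ S) * signs

theorem mulOp_apply_comm {p q : ZMod 2} {f g : Lambda n} (hf : f ∈ lpar n p)
    (hg : g ∈ lpar n q) : mulOp n f g = sgn (p * q) • mulOp n g f := by
  funext U
  simp only [Pi.smul_apply, mulOp_apply_apply, smul_eq_mul, Finset.mul_sum]
  have sdiff_sdiff : ∀ S ∈ U.powerset, U \ (U \ S) = S := fun S hS =>
    Finset.sdiff_sdiff_eq_self (Finset.mem_powerset.1 hS)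
  refine Finset.sum_nbij' (U \ ·) (U \ ·) (by simp) (by simp) sdiff_sdiff sdiff_sdiff
    fun S hS => ?_
  rw [sdiff_sdiff S hS]
  by_cases hSp : (S.card : ZMod 2) = p
  · by_cases hSq : ((U \ S).card : ZMod 2) = q
    · have sign_eq : sgn (p * q) =
          msign (inversions n S (U \ S)) * msign (inversions n (U \ S) S) := by
        rw [← msign_card_mul_card Finset.disjoint_sdiff, ← sgn_natCast, Nat.cast_mul, hSp, hSq]
      rw [sign_eq]
      linear_combination (-msign (inversions n S (U \ S)) * f S * g (U \ S)) *
        msign_mul_self (inversions n (U \ S) S)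
    · rw [hg _ hSq, mul_zero, mul_zero, zero_mul, mul_zero]
  · rw [hf _ hSp, mul_zero, zero_mul, mul_zero, mul_zero]

theorem mulOp_mul_mulOp_comm {p q : ZMod 2} {f g : Lambda n} (hf : f ∈ lpar n p)
    (hg : g ∈ lpar n q) : mulOp n f * mulOp n g = sgn (p * q) • (mulOp n g * mulOp n f) := by
  rw [← mulOp_mulOp, mulOp_apply_comm hf hg, map_smul, mulOp_mulOp]

theorem linearMap_ext_of_lpar {M : Type*} [AddCommMonoid M] [Module ℂ M]
    {A B : Lambda n →ₗ[ℂ] M} (h : ∀ p, ∀ f ∈ lpar n p, A f = B f) : A = B :=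
  LinearMap.pi_ext fun S _ => h S.card _ fun _ hT =>
    Pi.single_eq_of_ne (fun hTS => hT (congrArg _ (congrArg _ hTS))) _

theorem par_apply_of_mem_lpar {p : ZMod 2} {f : Lambda n} (hf : f ∈ lpar n p) :
    par n f = sgn p • f := by
  funext S
  rw [par_apply_apply, Pi.smul_apply, smul_eq_mul]
  by_cases hS : (S.card : ZMod 2) = p
  · rw [← hS, sgn_natCast]
  · rw [hf S hS, mul_zero, mul_zero]

theorem par_mul_par : par n * par n = 1 := by
  refine LinearMap.ext fun f => funext fun S => ?_
  change par n (par n f) S = f S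
  rw [par_apply_apply, par_apply_apply, ← mul_assoc, msign_mul_self, one_mul]

theorem mul_mem_epar {p q : ZMod 2} {D F : E n} (hD : D ∈ epar n p) (hF : F ∈ epar n q) :
    D * F ∈ epar n (p + q) := fun r f hf => by
  rw [add_comm p, ← add_assoc]
  exact hD _ _ (hF r f hf)

theorem mulOp_mem_epar {p : ZMod 2} {f : Lambda n} (hf : f ∈ lpar n p) :
    mulOp n f ∈ epar n p := by
  intro q g hg U hU
  refine Finset.sum_eq_zero fun S hS => ?_
  by_cases hSp : (S.card : ZMod 2) = p
  · have hSq : ((U \ S).card : ZMod 2) ≠ q := by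
      rintro rfl
      rw [← hSp, ← Nat.cast_add,
        Finset.card_sdiff_add_card_eq_card (Finset.mem_powerset.1 hS)] at hU
      exact hU rfl
    rw [hg _ hSq, mul_zero]
  · rw [hf _ hSp, mul_zero, zero_mul]

theorem pd_mem_epar (i : Fin n) : pd n i ∈ epar n 1 := by
  intro q f hf S hS
  by_cases hi : i ∈ S
  · exact pd_apply_of_mem hi f
  · have hiS : ((insert i S).card : ZMod 2) ≠ q := by
      rintro rfl
      rw [Finset.card_insert_of_notMem hi, Nat.cast_add, Nat.cast_one, add_assoc,
        CharTwo.add_self_eq_zero, add_zero] at hS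
      exact hS rfl
    rw [pd_apply_of_notMem hi, hf _ hiS, mul_zero]

theorem par_mul_of_mem_epar {p : ZMod 2} {D : E n} (hD : D ∈ epar n p) :
    par n * D = sgn p • (D * par n) :=
  linearMap_ext_of_lpar fun q f hf => by
    change par n (D f) = sgn p • D (par n f)
    rw [par_apply_of_mem_lpar hf, par_apply_of_mem_lpar (hD q f hf), map_smul, smul_smul,
      add_comm, sgn_add]

theorem par_mul_mul_par_of_mem_epar {p : ZMod 2} {D : E n} (hD : D ∈ epar n p) :
    par n * D * par n = sgn p • D := by
  rw [par_mul_of_mem_epar hD, smul_mul_assoc, mul_assoc, par_mul_par, mul_one]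

theorem sbL_of_mem_epar {p q : ZMod 2} {D F : E n} (hD : D ∈ epar n p) (hF : F ∈ epar n q) :
    sbL n D F = D * F - sgn (p * q) • (F * D) := by
  change D * F - (2 : ℂ)⁻¹ • ((F + par n * F * par n) * D +
    (F - par n * F * par n) * (par n * D * par n)) = _
  rw [par_mul_mul_par_of_mem_epar hD, par_mul_mul_par_of_mem_epar hF]
  simp only [add_mul, sub_mul, smul_mul_assoc, mul_smul_comm]
  rw [sgn_mul]
  module

theorem Wmap_eq_sum (a : Fin n → Lambda n) : Wmap n a = ∑ i, mulOp n (a i) * pd n i := rfl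

theorem Wmap_mem_epar {p : ZMod 2} {a : Fin n → Lambda n} (ha : ∀ i, a i ∈ lpar n (p + 1)) :
    Wmap n a ∈ epar n p := by
  rw [Wmap_eq_sum]
  refine Submodule.sum_mem _ fun i _ => ?_
  have := mul_mem_epar (mulOp_mem_epar (ha i)) (pd_mem_epar i)
  rwa [add_assoc, CharTwo.add_self_eq_zero, add_zero] at this

theorem Wmap_mul_mulOp {p r : ZMod 2} {a : Fin n → Lambda n} {b : Lambda n}
    (ha : ∀ i, a i ∈ lpar n (p + 1)) (hb : b ∈ lpar n r) :
    Wmap n a * mulOp n b = mulOp n (Wmap n a b) + sgn (p * r) • (mulOp n b * Wmap n a) := by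
  have summand (i : Fin n) : mulOp n (a i) * pd n i * mulOp n b =
      mulOp n (mulOp n (a i) (pd n i b)) +
        sgn (p * r) • (mulOp n b * (mulOp n (a i) * pd n i)) := by
    rw [mul_assoc, pd_mul_mulOp, par_apply_of_mem_lpar hb, mul_add, mulOp_mulOp, map_smul,
      smul_mul_assoc, mul_smul_comm, ← mul_assoc, mulOp_mul_mulOp_comm (ha i) hb, smul_mul_assoc,
      smul_smul, add_mul, one_mul, sgn_add, mul_left_comm, sgn_mul_self, mul_one, mul_assoc]
  simp only [Wmap_eq_sum, LinearMap.sum_apply, Module.End.mul_apply, map_sum, Finset.sum_mul,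
    Finset.mul_sum, Finset.smul_sum, summand, Finset.sum_add_distrib]

theorem Wmap_mul_Wmap {p q : ZMod 2} {a b : Fin n → Lambda n}
    (ha : ∀ i, a i ∈ lpar n (p + 1)) (hb : ∀ j, b j ∈ lpar n (q + 1)) :
    Wmap n a * Wmap n b = Wmap n (fun j => Wmap n a (b j)) +
      (sgn (p * q) * sgn p) •
        ∑ i, ∑ j, mulOp n (b j) * mulOp n (a i) * (pd n i * pd n j) := by
  have summand (j : Fin n) : Wmap n a * (mulOp n (b j) * pd n j) =
      mulOp n (Wmap n a (b j)) * pd n j +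
        (sgn (p * q) * sgn p) • ∑ i, mulOp n (b j) * mulOp n (a i) * (pd n i * pd n j) := by
    rw [← mul_assoc, Wmap_mul_mulOp ha (hb j), add_mul, smul_mul_assoc, mul_add p, mul_one,
      sgn_add, Wmap_eq_sum a]
    simp only [Finset.mul_sum, Finset.sum_mul, mul_assoc]
  rw [Wmap_eq_sum b, Finset.mul_sum, Finset.sum_congr rfl fun j _ => summand j,
    Finset.sum_add_distrib, ← Finset.smul_sum, Finset.sum_comm, Wmap_eq_sum fun j => Wmap n a (b j)]

theorem sbL_Wmap {p q : ZMod 2} {a b : Fin n → Lambda n}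
    (ha : ∀ i, a i ∈ lpar n (p + 1)) (hb : ∀ j, b j ∈ lpar n (q + 1)) :
    sbL n (Wmap n a) (Wmap n b) =
      Wmap n fun j => Wmap n a (b j) - sgn (p * q) • Wmap n b (a j) := by
  have second_order : (sgn (p * q) * sgn p) •
      ∑ i, ∑ j, mulOp n (b j) * mulOp n (a i) * (pd n i * pd n j) =
      sgn q • ∑ j, ∑ i, mulOp n (a i) * mulOp n (b j) * (pd n j * pd n i) := by
    rw [Finset.sum_comm, Finset.smul_sum, Finset.smul_sum]
    refine Finset.sum_congr rfl fun j _ => ?_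
    rw [Finset.smul_sum, Finset.smul_sum]
    refine Finset.sum_congr rfl fun i _ => ?_
    rw [mulOp_mul_mulOp_comm (ha i) (hb j), pd_mul_pd j, smul_mul_assoc, mul_smul_comm,
      smul_smul, smul_smul, sgn_succ_mul_succ]
    congr 1
    linear_combination -(sgn (p * q) * sgn p) * sgn_mul_self q
  have Wmap_sub : (Wmap n fun j => Wmap n a (b j) - sgn (p * q) • Wmap n b (a j)) =
      Wmap n (fun j => Wmap n a (b j)) - sgn (p * q) • Wmap n fun j => Wmap n b (a j) := by
    rw [← map_smul, ← map_sub]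
    rfl
  rw [sbL_of_mem_epar (Wmap_mem_epar ha) (Wmap_mem_epar hb), Wmap_mul_Wmap ha hb,
    Wmap_mul_Wmap hb ha, second_order, Wmap_sub, mul_comm q p, smul_add, smul_smul, ← mul_assoc,
    sgn_mul_self, one_mul]
  abel

theorem cidx_involutive : Function.Involutive (cidx n) := by
  intro i
  have := i.isLt
  apply Fin.ext
  simp only [cidx]
  split_ifs <;> omega

theorem DHmap_eq_sum (f : Lambda n) :
    DHmap n f = ∑ i, mulOp n (pd n i (par n f)) * pd n (cidx n i) := rfl

theorem DHmap_eq_Wmap (f : Lambda n) :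
    DHmap n f = Wmap n fun j => pd n (cidx n j) (par n f) := by
  rw [DHmap_eq_sum, Wmap_eq_sum, ← Equiv.sum_comp cidx_involutive.toPerm]
  simp only [Function.Involutive.coe_toPerm, cidx_involutive _]

theorem par_mem_lpar {p : ZMod 2} {f : Lambda n} (hf : f ∈ lpar n p) : par n f ∈ lpar n p := by
  rw [par_apply_of_mem_lpar hf]
  exact Submodule.smul_mem _ _ hf

theorem DHmap_mem_epar {p : ZMod 2} {f : Lambda n} (hf : f ∈ lpar n p) :
    DHmap n f ∈ epar n p := by
  rw [DHmap_eq_Wmap]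
  exact Wmap_mem_epar fun j => pd_mem_epar _ p _ (par_mem_lpar hf)

theorem pd_mul_DHmap (j : Fin n) (f : Lambda n) :
    pd n j * DHmap n f = DHmap n (pd n j f) + DHmap n (par n f) * pd n j := by
  have par_pd (i : Fin n) (h : Lambda n) : par n (pd n i h) = (-1 : ℂ) • pd n i (par n h) := by
    rw [← sgn_one]
    exact LinearMap.congr_fun (par_mul_of_mem_epar (pd_mem_epar i)) h
  have pd_pd (i : Fin n) (h : Lambda n) : pd n j (pd n i h) = (-1 : ℂ) • pd n i (pd n j h) :=
    LinearMap.congr_fun (pd_mul_pd j i) h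
  simp only [DHmap_eq_sum, Finset.mul_sum, Finset.sum_mul, ← Finset.sum_add_distrib]
  refine Finset.sum_congr rfl fun i _ => ?_
  rw [← mul_assoc, pd_mul_mulOp, add_mul, mul_assoc, pd_mul_pd j, par_pd, par_pd, pd_pd]
  simp only [map_smul, smul_mul_assoc, mul_smul_comm, smul_smul, mul_assoc]
  norm_num

theorem DHmap_apply_skew {p q : ZMod 2} {f g : Lambda n} (hf : f ∈ lpar n p)
    (hg : g ∈ lpar n q) : DHmap n f g = -(sgn (p * q) • DHmap n g f) := by
  rw [DHmap_eq_Wmap, DHmap_eq_sum, Wmap_eq_sum]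
  simp only [LinearMap.sum_apply, Module.End.mul_apply, Finset.smul_sum, ← Finset.sum_neg_distrib]
  refine Finset.sum_congr rfl fun i _ => ?_
  rw [mulOp_apply_comm (pd_mem_epar _ p _ (par_mem_lpar hf)) (pd_mem_epar _ q _ hg),
    par_apply_of_mem_lpar hf, par_apply_of_mem_lpar hg, sgn_succ_mul_succ]
  simp only [map_smul, LinearMap.smul_apply, smul_smul, ← neg_smul]
  congr 1
  linear_combination -(sgn (p * q) * sgn q) * sgn_mul_self p

theorem pd_par_DHmap_apply {p q : ZMod 2} {f g : Lambda n} (hf : f ∈ lpar n p)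
    (hg : g ∈ lpar n q) (j : Fin n) :
    pd n j (par n (DHmap n f g)) =
      DHmap n f (pd n j (par n g)) - sgn (p * q) • DHmap n g (pd n j (par n f)) := by
  have leibniz : pd n j (DHmap n f g) = DHmap n (pd n j f) g + DHmap n (par n f) (pd n j g) :=
    LinearMap.congr_fun (pd_mul_DHmap j f) g
  rw [par_apply_of_mem_lpar (DHmap_mem_epar hf q g hg), map_smul, leibniz,
    DHmap_apply_skew (pd_mem_epar j p f hf) hg, par_apply_of_mem_lpar hf,
    par_apply_of_mem_lpar hg, add_mul, one_mul, sgn_add, sgn_add]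
  simp only [map_smul, LinearMap.smul_apply]
  linear_combination (norm := module) (sgn q * sgn_mul_self p) • DHmap n f (pd n j g) -
    (sgn (p * q) * sgn p * sgn_mul_self q) • DHmap n g (pd n j f)

theorem sbL_DHmap_of_mem_lpar {p q : ZMod 2} {f g : Lambda n} (hf : f ∈ lpar n p)
    (hg : g ∈ lpar n q) : sbL n (DHmap n f) (DHmap n g) = DHmap n (DHmap n f g) := by
  have coeff_mem {r : ZMod 2} {h : Lambda n} (hh : h ∈ lpar n r) (j : Fin n) :
      pd n (cidx n j) (par n h) ∈ lpar n (r + 1) := pd_mem_epar _ r _ (par_mem_lpar hh)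
  rw [DHmap_eq_Wmap f, DHmap_eq_Wmap g, sbL_Wmap (coeff_mem hf) (coeff_mem hg),
    ← DHmap_eq_Wmap f, ← DHmap_eq_Wmap g, DHmap_eq_Wmap (DHmap n f g)]
  simp only [pd_par_DHmap_apply hf hg]

theorem DH_bracket_general (f g : Lambda n) :
    sbL n (DHmap n f) (DHmap n g) = DHmap n (DHmap n f g) := by
  have bilinear_eq : (sbL n).compl₁₂ (DHmap n) (DHmap n) = (DHmap n).compr₂ (DHmap n) :=
    linearMap_ext_of_lpar fun p f hf => linearMap_ext_of_lpar fun q g hg =>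
      sbL_DHmap_of_mem_lpar hf hg
  exact LinearMap.congr_fun₂ bilinear_eq f g

end

/-- For all homogeneous `f, g ∈ Λ(n)`,
`[D_H(f), D_H(g)] = D_H(D_H(f)(g))`. -/
theorem DH_bracket (n : ℕ) (p q : ZMod 2) (f g : Lambda n)
    (hf : f ∈ lpar n p) (hg : g ∈ lpar n q) :
    sbL n (DHmap n f) (DHmap n g) = DHmap n (DHmap n f g) :=
  DH_bracket_general f g

end CartanSuper
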